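/- Let ⟨α,α'⟩, ⟨β,β'⟩ and ⟨γ,γ'⟩ be (m,n)-shuffles with ⟨α,α'⟩ ≤ ⟨β,β'⟩, and suppose ⟨γ,γ'⟩ ≱ ⟨α,α'⟩ (i.e. it is not the case that γ(i) ≥ α(i) for all i). Then there exists an index j such that γ(j) ≠ β(j) and, in addition, either j ∉ ⌞⟨β,β'⟩ or β(j) = α(j). -/

import Mathlib

/-- Extend a map `Fin (N+1) → Fin (M+1)` to a `ℕ`-valued map on all of `ℕ`,
clamping the input to the range `{0, …, N}`. -/
def extendFin {N M : ℕ} (f : Fin (N + 1) → Fin (M + 1)) (i : ℕ) : ℕ :=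
  (f ⟨min i N, Nat.lt_succ_of_le (min_le_right i N)⟩ : ℕ)

/-- `⟨α, α'⟩` is an `(m,n)`-shuffle: both maps are monotone surjections and
`α i + α' i = i` for all `i`. -/
def IsShuffle (m n : ℕ) (α : Fin (m + n + 1) → Fin (m + 1))
    (α' : Fin (m + n + 1) → Fin (n + 1)) : Prop :=
  Monotone α ∧ Monotone α' ∧ Function.Surjective α ∧ Function.Surjective α' ∧
    ∀ i : Fin (m + n + 1), (α i : ℕ) + (α' i : ℕ) = (i : ℕ)

/-- The pointwise order on `(m,n)`-shuffles (a shuffle is determined by its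
first component). -/
def ShuffleLE (m n : ℕ) (α β : Fin (m + n + 1) → Fin (m + 1)) : Prop :=
  ∀ i, α i ≤ β i

/-- The strict pointwise order on `(m,n)`-shuffles. -/
def ShuffleLT (m n : ℕ) (α β : Fin (m + n + 1) → Fin (m + 1)) : Prop :=
  ShuffleLE m n α β ∧ α ≠ β

/-- The lower-right corner set `⌞⟨α,α'⟩`: all `i` with `1 ≤ i ≤ m+n-1` such that
`α(i+1) = α(i) = α(i-1)+1`. -/
def lrCorner (m n : ℕ) (α : Fin (m + n + 1) → Fin (m + 1)) : Set ℕ :=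
  {i | 1 ≤ i ∧ i + 1 ≤ m + n ∧
    extendFin α (i + 1) = extendFin α i ∧ extendFin α i = extendFin α (i - 1) + 1}

/-- The upper-left corner set `⌜⟨α,α'⟩`: all `i` with `1 ≤ i ≤ m+n-1` such that
`α(i+1) = α(i)+1 = α(i-1)+1`. -/
def ulCorner (m n : ℕ) (α : Fin (m + n + 1) → Fin (m + 1)) : Set ℕ :=
  {i | 1 ≤ i ∧ i + 1 ≤ m + n ∧
    extendFin α (i + 1) = extendFin α i + 1 ∧ extendFin α i = extendFin α (i - 1)}

/-- `⟨β,β'⟩` is an immediate predecessor of `⟨α,α'⟩`: it is a shuffle, `β < α`,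
and no shuffle lies strictly between them. -/
def IsImmPred (m n : ℕ)
    (β : Fin (m + n + 1) → Fin (m + 1)) (β' : Fin (m + n + 1) → Fin (n + 1))
    (α : Fin (m + n + 1) → Fin (m + 1)) (α' : Fin (m + n + 1) → Fin (n + 1)) : Prop :=
  IsShuffle m n β β' ∧ ShuffleLT m n β α ∧
    ∀ (γ : Fin (m + n + 1) → Fin (m + 1)) (γ' : Fin (m + n + 1) → Fin (n + 1)),
      IsShuffle m n γ γ' → ¬ (ShuffleLT m n β γ ∧ ShuffleLT m n γ α)

/-- `⟨γ,γ'⟩` is an immediate successor of `⟨α,α'⟩`: it is a shuffle, `α < γ`,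
and no shuffle lies strictly between them. -/
def IsImmSucc (m n : ℕ)
    (γ : Fin (m + n + 1) → Fin (m + 1)) (γ' : Fin (m + n + 1) → Fin (n + 1))
    (α : Fin (m + n + 1) → Fin (m + 1)) (α' : Fin (m + n + 1) → Fin (n + 1)) : Prop :=
  IsShuffle m n γ γ' ∧ ShuffleLT m n α γ ∧
    ∀ (δ : Fin (m + n + 1) → Fin (m + 1)) (δ' : Fin (m + n + 1) → Fin (n + 1)),
      IsShuffle m n δ δ' → ¬ (ShuffleLT m n α δ ∧ ShuffleLT m n δ γ)

/-! Suppose `γ i < α i ≤ β i`. If `j = i` fails, then `i` is a lower-right corner of `β` and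
`α i < β i`, so `γ i + 1 < β i`. Since `β` climbs by exactly one from `i - 1` to `i`, `γ` is still
below `β` at `i - 1`; and `i - 1` is not a corner, because `β` would have to be flat right
after it. Hence `j = i - 1` works. -/

theorem extendFin_val {N M : ℕ} (f : Fin (N + 1) → Fin (M + 1)) (i : Fin (N + 1)) :
    extendFin f i = f i := by
  simp only [extendFin, min_eq_left (Fin.is_le i)]

theorem extendFin_mono {N M : ℕ} {f : Fin (N + 1) → Fin (M + 1)} (hf : Monotone f) :
    Monotone (extendFin f) :=
  fun _ _ hij => hf (min_le_min_right N hij)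

section Corner

variable {m n : ℕ} {β γ : Fin (m + n + 1) → Fin (m + 1)}

theorem pred_notMem_lrCorner {i : ℕ} (hi : i ∈ lrCorner m n β) : i - 1 ∉ lrCorner m n β := by
  rintro ⟨-, -, hflat, -⟩
  obtain ⟨hpos, -, -, hstep⟩ := hi
  rw [Nat.sub_add_cancel hpos] at hflat
  omega

theorem extendFin_pred_lt_of_mem_lrCorner {i : ℕ} (hγ : Monotone γ) (hi : i ∈ lrCorner m n β)
    (hlt : extendFin γ i + 1 < extendFin β i) : extendFin γ (i - 1) < extendFin β (i - 1) := by
  obtain ⟨-, -, -, hstep⟩ := hi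
  have hmono : extendFin γ (i - 1) ≤ extendFin γ i := extendFin_mono hγ (Nat.sub_le i 1)
  omega

end Corner

theorem exists_ne_index_general {m n : ℕ} {α β γ : Fin (m + n + 1) → Fin (m + 1)}
    (hγ : Monotone γ) {i : Fin (m + n + 1)} (hγα : γ i < α i) (hαβ : α i ≤ β i) :
    ∃ j : Fin (m + n + 1), γ j < β j ∧ ((j : ℕ) ∉ lrCorner m n β ∨ β j = α j) := by
  by_cases hi : (i : ℕ) ∉ lrCorner m n β ∨ β i = α i
  · exact ⟨i, hγα.trans_le hαβ, hi⟩
  obtain ⟨hcorner, hne⟩ : (i : ℕ) ∈ lrCorner m n β ∧ β i ≠ α i := by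
    simpa only [not_or, not_not] using hi
  have hgap : extendFin γ i + 1 < extendFin β i := by
    have hαβ_lt : α i < β i := lt_of_le_of_ne hαβ hne.symm
    rw [extendFin_val, extendFin_val]
    omega
  let j : Fin (m + n + 1) := ⟨i - 1, by omega⟩
  have hj : extendFin γ j < extendFin β j := extendFin_pred_lt_of_mem_lrCorner hγ hcorner hgap
  rw [extendFin_val, extendFin_val] at hj
  exact ⟨j, hj, Or.inl (pred_notMem_lrCorner hcorner)⟩

/-- If `⟨α,α'⟩ ≤ ⟨β,β'⟩` are shuffles and `⟨γ,γ'⟩` is a shuffle with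
`⟨γ,γ'⟩ ≱ ⟨α,α'⟩`, then there is an index `j` with `γ j ≠ β j` such that either
`j` is not a lower-right corner of `⟨β,β'⟩` or `β j = α j`. -/
theorem exists_ne_index (m n : ℕ)
    (α : Fin (m + n + 1) → Fin (m + 1)) (α' : Fin (m + n + 1) → Fin (n + 1))
    (β : Fin (m + n + 1) → Fin (m + 1)) (β' : Fin (m + n + 1) → Fin (n + 1))
    (γ : Fin (m + n + 1) → Fin (m + 1)) (γ' : Fin (m + n + 1) → Fin (n + 1))
    (hα : IsShuffle m n α α') (hβ : IsShuffle m n β β') (hγ : IsShuffle m n γ γ')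
    (hab : ShuffleLE m n α β) (hna : ¬ ShuffleLE m n α γ) :
    ∃ j : Fin (m + n + 1), γ j ≠ β j ∧
      ((j : ℕ) ∉ lrCorner m n β ∨ β j = α j) := by
  obtain ⟨i, hi⟩ : ∃ i, γ i < α i := by simpa only [ShuffleLE, not_forall, not_le] using hna
  exact (exists_ne_index_general hγ.1 hi (hab i)).imp fun _ hj => ⟨hj.1.ne, hj.2⟩
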